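/- arXiv:1912.05069 — 2 statements merged into one kernel-verified Lean document; each statement's English description precedes it below -/
import Mathlib

section
/- Comparison of KPP solutions under constant multiples of initial data. Let u₁ and u₂ be solutions of the KPP equation with nonnegative bounded initial conditions, and let c > 1. If u₁(0,x) ≤ c·u₂(0,x) for all x ∈ ℝ, then u₁(t,x) ≤ c·u₂(t,x) for all t > 0 and x ∈ ℝ. -/
open MeasureTheory Set Filter Topology

/-- The branching mechanism ψ(λ) = −λ + βλ² + ∫₀^∞ (e^{−λy} − 1 + λy) n(dy). -/
noncomputable def psi (β : ℝ) (n : Measure ℝ) (l : ℝ) : ℝ :=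
  -l + β * l ^ 2 + ∫ y in Ioi (0 : ℝ), (Real.exp (-l * y) - 1 + l * y) ∂n

/-- A solution of the KPP equation ∂u/∂t − (1/2)∂²u/∂x² = −ψ(u): a nonnegative function
on [0,∞) × ℝ, continuous on [0,∞) × ℝ, C^{1,2} on (0,∞) × ℝ, bounded on [0,T] × ℝ
for every T > 0, satisfying the equation for all t > 0, x ∈ ℝ. -/
def IsKPPSolution (β : ℝ) (n : Measure ℝ) (u : ℝ → ℝ → ℝ) : Prop :=
  (∀ t : ℝ, 0 ≤ t → ∀ x : ℝ, 0 ≤ u t x) ∧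
  ContinuousOn (fun p : ℝ × ℝ => u p.1 p.2) (Ici (0 : ℝ) ×ˢ (univ : Set ℝ)) ∧
  (∀ x : ℝ, ∀ t : ℝ, 0 < t → DifferentiableAt ℝ (fun s => u s x) t) ∧
  (∀ t : ℝ, 0 < t → ContDiff ℝ 2 (u t)) ∧
  (∀ T : ℝ, 0 < T → ∃ C : ℝ, ∀ t ∈ Icc (0 : ℝ) T, ∀ x : ℝ, |u t x| ≤ C) ∧
  (∀ t : ℝ, 0 < t → ∀ x : ℝ,
    deriv (fun s => u s x) t - (1 / 2) * deriv (deriv (u t)) x = -psi β n (u t x))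

lemma kpp_h_ineq {a b c : ℝ} (ha : 0 ≤ a) (hc : 1 < c) (hb : c * a ≤ b) :
    c * (Real.exp (-a) - 1 + a) ≤ Real.exp (-b) - 1 + b := by
  have h1 : 1 + c * (Real.exp (-a) - 1) ≤ Real.exp (-(c * a)) := by
    have := one_add_mul_self_le_rpow_one_add (s := Real.exp (-a) - 1)
      (by linarith [Real.exp_pos (-a)]) hc.le
    have e : (1 + (Real.exp (-a) - 1)) ^ c = Real.exp (-(c * a)) := by
      rw [add_sub_cancel, ← Real.exp_mul]; ring_nf
    rwa [e] at this
  have h2 : Real.exp (-b) = Real.exp (-(c * a)) * Real.exp (-(b - c * a)) := by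
    rw [← Real.exp_add]; ring_nf
  have h3 := Real.add_one_le_exp (-(b - c * a))
  have h4 : Real.exp (-(c * a)) ≤ 1 := Real.exp_le_one_iff.2 (by nlinarith)
  have h5 := Real.exp_pos (-(c * a))
  nlinarith [mul_le_mul_of_nonneg_left h3 h5.le,
    mul_nonneg (sub_nonneg.2 h4) (sub_nonneg.2 hb)]

lemma kpp_h_nonneg (a : ℝ) : 0 ≤ Real.exp (-a) - 1 + a := by
  linarith [Real.add_one_le_exp (-a)]

lemma kpp_h_le {a : ℝ} (ha : 0 ≤ a) : Real.exp (-a) - 1 + a ≤ a ∧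
    Real.exp (-a) - 1 + a ≤ a ^ 2 := by
  have h1 : Real.exp (-a) ≤ 1 := Real.exp_le_one_iff.2 (by linarith)
  refine ⟨by linarith, ?_⟩
  by_cases h : a ≤ 1
  · have := Real.abs_exp_sub_one_sub_id_le (x := -a) (by rw [abs_neg, abs_of_nonneg ha]; exact h)
    have := (abs_le.1 this).2
    nlinarith
  · nlinarith

lemma kpp_integrable (n : Measure ℝ)
    (hn : ∫⁻ y in Ioi (0 : ℝ), ENNReal.ofReal (min (y ^ 2) y) ∂n < ⊤) {l : ℝ} (hl : 0 ≤ l) :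
    IntegrableOn (fun y => Real.exp (-l * y) - 1 + l * y) (Ioi 0) n := by
  have hpos : ∀ᵐ y ∂(n.restrict (Ioi (0 : ℝ))), 0 < y :=
    (ae_restrict_mem measurableSet_Ioi)
  have hmin : Integrable (fun y : ℝ => min (y ^ 2) y) (n.restrict (Ioi 0)) := by
    refine ⟨by fun_prop, ?_⟩
    rw [hasFiniteIntegral_iff_ofReal]
    · exact hn
    · filter_upwards [hpos] with y hy
      exact le_min (by positivity) hy.le
  refine (hmin.const_mul (l ^ 2 + l)).mono' (by fun_prop) ?_
  filter_upwards [hpos] with y hy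
  have hy0 : 0 < y := hy
  have hly : 0 ≤ l * y := by positivity
  have h1 := kpp_h_nonneg (l * y)
  have h2 := kpp_h_le hly
  rw [neg_mul, Real.norm_of_nonneg h1]
  rcases min_cases (y ^ 2) y with ⟨h, _⟩ | ⟨h, _⟩ <;> rw [h]
  · nlinarith [h2.2, mul_nonneg hl (sq_nonneg y)]
  · nlinarith [h2.1, mul_nonneg (sq_nonneg l) hy0.le]

lemma kpp_psi_ineq (β : ℝ) (hβ : 0 ≤ β) (n : Measure ℝ)
    (hn : ∫⁻ y in Ioi (0 : ℝ), ENNReal.ofReal (min (y ^ 2) y) ∂n < ⊤)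
    {a b c : ℝ} (ha : 0 ≤ a) (hc : 1 < c) (hb : c * a ≤ b) :
    c * psi β n a - psi β n b ≤ b - c * a := by
  have hb0 : 0 ≤ b := le_trans (by positivity) hb
  have hI : c * ∫ y in Ioi (0 : ℝ), (Real.exp (-a * y) - 1 + a * y) ∂n
      ≤ ∫ y in Ioi (0 : ℝ), (Real.exp (-b * y) - 1 + b * y) ∂n := by
    rw [← integral_const_mul]
    refine setIntegral_mono_on ((kpp_integrable n hn ha).const_mul c) (kpp_integrable n hn hb0)
      measurableSet_Ioi ?_
    intro y hy
    have hy0 : 0 < y := hy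
    rw [neg_mul, neg_mul]
    exact kpp_h_ineq (by positivity) hc (by nlinarith)
  have hq : c * a ^ 2 ≤ b ^ 2 := by
    have h1 : (c * a) ^ 2 ≤ b ^ 2 := by gcongr
    nlinarith [mul_nonneg (sq_nonneg a) (mul_nonneg (by linarith : 0 ≤ c) (by linarith : 0 ≤ c - 1))]
  have hq2 := mul_le_mul_of_nonneg_left hq hβ
  unfold psi
  nlinarith

lemma kpp_second_deriv {f : ℝ → ℝ} {x : ℝ} (hf : Continuous f) (h : IsLocalMax f x) :
    deriv (deriv f) x ≤ 0 := by
  by_contra hlt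
  push Not at hlt
  have hmin := isLocalMin_of_deriv_deriv_pos hlt h.deriv_eq_zero hf.continuousAt
  have hev : f =ᶠ[𝓝 x] fun _ => f x := by
    filter_upwards [h, hmin] with y h1 h2
    exact le_antisymm h1 h2
  have := hev.deriv.deriv_eq
  simp at this
  linarith

lemma kpp_left_deriv {f : ℝ → ℝ} {d t : ℝ} (ht : 0 < t) (hf : HasDerivAt f d t)
    (h : ∀ s ∈ Icc 0 t, f s ≤ f t) : 0 ≤ d := by
  have h1 := hasDerivAt_iff_tendsto_slope.1 hf
  have h2 : Tendsto (slope f t) (𝓝[<] t) (𝓝 d) :=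
    h1.mono_left (nhdsWithin_mono _ fun s hs => ne_of_lt hs)
  refine ge_of_tendsto h2 ?_
  filter_upwards [Ioo_mem_nhdsLT ht] with s hs
  rw [slope_def_field]
  exact div_nonneg_of_nonpos (by linarith [h s ⟨hs.1.le, hs.2.le⟩]) (by linarith [hs.2])

/-- Comparison of KPP solutions under constant multiples of initial data. -/
theorem kpp_comparison_const_multiple
    (β : ℝ) (hβ : 0 ≤ β) (n : Measure ℝ) [SigmaFinite n]
    (hn : ∫⁻ y in Ioi (0 : ℝ), ENNReal.ofReal (min (y ^ 2) y) ∂n < ⊤)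
    (u₁ u₂ : ℝ → ℝ → ℝ)
    (hu₁ : IsKPPSolution β n u₁) (hu₂ : IsKPPSolution β n u₂)
    (hbdd₁ : ∃ C : ℝ, ∀ x : ℝ, u₁ 0 x ≤ C) (hbdd₂ : ∃ C : ℝ, ∀ x : ℝ, u₂ 0 x ≤ C)
    (c : ℝ) (hc : 1 < c)
    (hinit : ∀ x : ℝ, u₁ 0 x ≤ c * u₂ 0 x) :
    ∀ t : ℝ, 0 < t → ∀ x : ℝ, u₁ t x ≤ c * u₂ t x := by
  intro T hT x₀
  by_contra hcon
  push Not at hcon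
  obtain ⟨p1, c1, dt1, dx1, b1, e1⟩ := hu₁
  obtain ⟨p2, c2, dt2, dx2, b2, e2⟩ := hu₂
  obtain ⟨M, hM⟩ := b1 T hT
  have hM0 : 0 ≤ M := (abs_nonneg _).trans (hM 0 ⟨le_rfl, hT.le⟩ 0)
  set δ := Real.exp (-T) * (u₁ T x₀ - c * u₂ T x₀) with hδ
  have hδ0 : 0 < δ := mul_pos (Real.exp_pos _) (by linarith)
  obtain ⟨ε, hε, hεδ⟩ : ∃ ε : ℝ, 0 < ε ∧ ε * (x₀ ^ 2 + 2 * T) < δ := by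
    refine ⟨δ / (x₀ ^ 2 + 2 * T + 1), by positivity, ?_⟩
    rw [div_mul_eq_mul_div, div_lt_iff₀ (by positivity)]
    nlinarith
  set z : ℝ → ℝ → ℝ := fun t x =>
    Real.exp (-t) * (u₁ t x - c * u₂ t x) - ε * (x ^ 2 + 2 * t) with hz
  have hz0 : 0 < z T x₀ := by simp only [hz]; linarith
  -- any positive point has positive difference, and is confined in space
  have hzw : ∀ t ∈ Icc 0 T, ∀ x, 0 < z t x → c * u₂ t x < u₁ t x ∧ ε * x ^ 2 < M := by
    intro t ht x hp
    simp only [hz] at hp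
    have he := Real.exp_pos (-t)
    have he1 : Real.exp (-t) ≤ 1 := Real.exp_le_one_iff.2 (by linarith [ht.1])
    have hq : 0 ≤ ε * x ^ 2 := by positivity
    have hq2 : 0 ≤ ε * t := mul_nonneg hε.le ht.1
    have hw : 0 < u₁ t x - c * u₂ t x := by
      by_contra hneg
      push Not at hneg
      nlinarith [mul_nonneg he.le (sub_nonneg.2 hneg)]
    refine ⟨by linarith, ?_⟩
    have h3 : u₁ t x ≤ M := (abs_le.1 (hM t ht x)).2
    have h4 : 0 ≤ c * u₂ t x := mul_nonneg (by linarith) (p2 t ht.1 x)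
    nlinarith [mul_nonneg (sub_nonneg.2 he1) hw.le]
  obtain ⟨R, hR0, hR⟩ : ∃ R : ℝ, 0 < R ∧ M ≤ ε * R ^ 2 := by
    refine ⟨M / ε + 1, by positivity, ?_⟩
    have h0 : 0 ≤ M / ε := by positivity
    have h1 : ε * (M / ε) = M := by field_simp
    nlinarith [mul_nonneg hε.le h0, mul_nonneg hε.le (sq_nonneg (M / ε))]
  have hloc : ∀ t ∈ Icc 0 T, ∀ x, 0 < z t x → x ∈ Ioo (-R) R := by
    intro t ht x hp
    have h1 := (hzw t ht x hp).2
    have h2 : x ^ 2 < R ^ 2 := by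
      by_contra hneg
      push Not at hneg
      nlinarith [mul_le_mul_of_nonneg_left hneg hε.le]
    exact abs_lt.1 (abs_lt_of_sq_lt_sq h2 hR0.le)
  have hcont : ContinuousOn (fun p : ℝ × ℝ => z p.1 p.2) (Icc 0 T ×ˢ Icc (-R) R) := by
    have hsub : Icc 0 T ×ˢ Icc (-R) R ⊆ Ici (0 : ℝ) ×ˢ (univ : Set ℝ) :=
      prod_mono (fun t ht => ht.1) (subset_univ _)
    have c1' := c1.mono hsub
    have c2' := c2.mono hsub
    simp only [hz]
    fun_prop
  have hmem : (T, x₀) ∈ Icc 0 T ×ˢ Icc (-R) R :=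
    ⟨⟨hT.le, le_rfl⟩, Ioo_subset_Icc_self (hloc T ⟨hT.le, le_rfl⟩ x₀ hz0)⟩
  obtain ⟨⟨t, x⟩, ⟨ht, hx⟩, hmax⟩ :=
    (isCompact_Icc.prod isCompact_Icc).exists_isMaxOn ⟨_, hmem⟩ hcont
  simp only at ht hx
  have hmax' : ∀ s ∈ Icc 0 T, ∀ y ∈ Icc (-R) R, z s y ≤ z t x :=
    fun s hs y hy => hmax (mk_mem_prod hs hy)
  have hpos : 0 < z t x := hz0.trans_le (hmax' _ hmem.1 _ hmem.2)
  have hxI := hloc t ht x hpos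
  have hw := (hzw t ht x hpos).1
  have ht0 : 0 < t := by
    rcases ht.1.eq_or_lt with h | h
    · rw [← h] at hw
      linarith [hinit x]
    · exact h
  -- time derivative
  have hd1 := (dt1 x t ht0).hasDerivAt
  have hd2 := (dt2 x t ht0).hasDerivAt
  have hE : HasDerivAt (fun s : ℝ => Real.exp (-s)) (-Real.exp (-t)) t := by
    simpa using (hasDerivAt_neg t).exp
  have hdt : HasDerivAt (fun s => z s x)
      (-Real.exp (-t) * (u₁ t x - c * u₂ t x) + Real.exp (-t) *
        (deriv (fun s => u₁ s x) t - c * deriv (fun s => u₂ s x) t) - ε * (2 * 1)) t :=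
    (hE.mul (hd1.sub (hd2.const_mul c))).sub
      ((((hasDerivAt_id t).const_mul 2).const_add (x ^ 2)).const_mul ε)
  have hA := kpp_left_deriv ht0 hdt
    (fun s hs => hmax' s ⟨hs.1, hs.2.trans ht.2⟩ x hx)
  -- space derivative
  have D1 := dx1 t ht0
  have D2 := dx2 t ht0
  have hlm : IsLocalMax (z t) x := by
    filter_upwards [Ioo_mem_nhds hxI.1 hxI.2] with y hy
    exact hmax' t ht y (Ioo_subset_Icc_self hy)
  have F1 : Differentiable ℝ (u₁ t) := D1.differentiable (by norm_num)
  have F2 : Differentiable ℝ (u₂ t) := D2.differentiable (by norm_num)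
  have G1 : Differentiable ℝ (deriv (u₁ t)) :=
    ((contDiff_succ_iff_deriv (n := 1)).1 D1).2.2.differentiable (by norm_num)
  have G2 : Differentiable ℝ (deriv (u₂ t)) :=
    ((contDiff_succ_iff_deriv (n := 1)).1 D2).2.2.differentiable (by norm_num)
  have hzx : ∀ y, HasDerivAt (z t)
      (Real.exp (-t) * (deriv (u₁ t) y - c * deriv (u₂ t) y) - ε * (2 * y)) y := by
    intro y
    have hsq : HasDerivAt (fun y : ℝ => y ^ 2 + 2 * t) (2 * y) y := by
      simpa using (hasDerivAt_pow 2 y).add_const (2 * t)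
    exact (((F1 y).hasDerivAt.sub ((F2 y).hasDerivAt.const_mul c)).const_mul _).sub
      (hsq.const_mul ε)
  have hzx' : deriv (z t) = fun y =>
      Real.exp (-t) * (deriv (u₁ t) y - c * deriv (u₂ t) y) - ε * (2 * y) :=
    funext fun y => (hzx y).deriv
  have hzxx : HasDerivAt (deriv (z t))
      (Real.exp (-t) * (deriv (deriv (u₁ t)) x - c * deriv (deriv (u₂ t)) x) - ε * (2 * 1)) x := by
    rw [hzx']
    exact (((G1 x).hasDerivAt.sub ((G2 x).hasDerivAt.const_mul c)).const_mul _).sub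
      (((hasDerivAt_id x).const_mul 2).const_mul ε)
  have hB := kpp_second_deriv (f := z t) (x := x)
    (continuous_iff_continuousAt.2 fun y => (hzx y).continuousAt) hlm
  rw [hzxx.deriv] at hB
  have hP := kpp_psi_ineq β hβ n hn (p2 t ht.1 x) hc hw.le
  have E1 := e1 t ht0 x
  have E2 := e2 t ht0 x
  have hfin : (deriv (fun s => u₁ s x) t - c * deriv (fun s => u₂ s x) t)
      - (1 / 2) * (deriv (deriv (u₁ t)) x - c * deriv (deriv (u₂ t)) x)
      ≤ u₁ t x - c * u₂ t x := by
    have : (deriv (fun s => u₁ s x) t - c * deriv (fun s => u₂ s x) t)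
      - (1 / 2) * (deriv (deriv (u₁ t)) x - c * deriv (deriv (u₂ t)) x)
      = c * psi β n (u₂ t x) - psi β n (u₁ t x) := by
      linear_combination E1 - c * E2
    linarith
  have := mul_le_mul_of_nonneg_left hfin (Real.exp_pos (-t)).le
  nlinarith
end

section
/- Existence of a blow-up solution of the stable ODE (Lemma 4.2). Let a > 0, b > 0 and ϑ ∈ (0,1]. There exist positive constants c₁ = c₁(a,b,ϑ), c₂ = c₂(a,b,ϑ) and c₃ = c₃(a,b,ϑ) such that for every A > 0 there is an even, twice continuously differentiable function h_A : (−A,A) → ℝ satisfying (1/2) h_A″(x) = −a h_A(x) + b h_A(x)^{1+ϑ} for |x| < A, with h_A(x) → ∞ as x → A− and as x → −A+, and such that: (1) max{(a/b)^{1/ϑ}, c₂ A^{2/ϑ} (A² − x²)^{−2/ϑ}} ≤ h_A(x) ≤ (a/b)^{1/ϑ} (1 + c₁ A^{2/ϑ} (A² − x²)^{−2/ϑ}) for all |x| < A; (2) |h_A′(x)| / h_A(x) ≤ c₃ / (A − |x|) for all |x| < A. -/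
open MeasureTheory Set Filter Topology

noncomputable def sbF (ϑ : ℝ) (v : ℝ) : ℝ := v ^ (2 + ϑ) / (2 + ϑ) - v ^ 2 / 2

noncomputable def sbD (ϑ n u : ℝ) : ℝ := dslope (sbF ϑ) (1 + n) (1 + u)

noncomputable def sbH (a ϑ n s : ℝ) : ℝ := a / n * sbD ϑ n (n * (1 + s ^ 2))

lemma sbF_hasDerivAt {ϑ : ℝ} (h0 : 0 < ϑ) (v : ℝ) :
    HasDerivAt (sbF ϑ) (v ^ (1 + ϑ) - v) v := by
  have h1 : HasDerivAt (fun v : ℝ => v ^ (2 + ϑ)) ((2 + ϑ) * v ^ (2 + ϑ - 1)) v :=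
    Real.hasDerivAt_rpow_const (Or.inr (by linarith))
  have h2 := (h1.div_const (2 + ϑ)).sub ((hasDerivAt_pow 2 v).div_const 2)
  refine h2.congr_deriv ?_
  have : 2 + ϑ - 1 = 1 + ϑ := by ring
  rw [this]
  have : 2 + ϑ ≠ 0 := by positivity
  field_simp
  simp
  ring

lemma sbf_lower {ϑ u : ℝ} (h0 : 0 < ϑ) (h1 : ϑ ≤ 1) (hu : 0 ≤ u) :
    ϑ * u * (1 + u) ^ ϑ ≤ (1 + u) ^ (1 + ϑ) - (1 + u) := by
  have hp : 0 < 1 + u := by linarith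
  have h := _root_.rpow_one_add_le_one_add_mul_self (s := -(u / (1 + u)))
    (by
      have : u / (1 + u) ≤ 1 := by rw [div_le_one hp]; linarith
      linarith) h0.le h1
  have e : 1 + -(u / (1 + u)) = (1 + u)⁻¹ := by field_simp; ring
  rw [e, Real.inv_rpow hp.le] at h
  have hP : 0 < (1 + u) ^ ϑ := by positivity
  rw [Real.rpow_add hp, Real.rpow_one]
  have h2 := mul_le_mul_of_nonneg_right h (mul_pos hp hP).le
  have e1 : ((1 + u) ^ ϑ)⁻¹ * ((1 + u) * (1 + u) ^ ϑ) = 1 + u := by field_simp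
  have e2 : (1 + ϑ * -(u / (1 + u))) * ((1 + u) * (1 + u) ^ ϑ)
      = (1 + u) * (1 + u) ^ ϑ - ϑ * u * (1 + u) ^ ϑ := by field_simp; ring
  rw [e1, e2] at h2
  linarith

lemma sbf_lower' {ϑ u : ℝ} (h0 : 0 < ϑ) (h1 : ϑ ≤ 1) (hu : 0 ≤ u) :
    ϑ * u ^ (1 + ϑ) ≤ (1 + u) ^ (1 + ϑ) - (1 + u) := by
  refine le_trans ?_ (sbf_lower h0 h1 hu)
  rw [Real.rpow_add_of_nonneg hu zero_le_one h0.le, Real.rpow_one, ← mul_assoc]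
  gcongr
  linarith

lemma sbf_upper {ϑ u : ℝ} (h1 : ϑ ≤ 1) (hu : 0 ≤ u) :
    (1 + u) ^ (1 + ϑ) - (1 + u) ≤ u * (1 + u) ^ ϑ := by
  have hp : 0 < 1 + u := by linarith
  rw [Real.rpow_add hp, Real.rpow_one]
  have : (1 + u) ^ ϑ ≤ (1 + u) ^ (1 : ℝ) := Real.rpow_le_rpow_of_exponent_le (by linarith) h1
  rw [Real.rpow_one] at this
  linarith

lemma sbF_diff_lower {ϑ n u : ℝ} (h0 : 0 < ϑ) (h1 : ϑ ≤ 1) (hn : 0 < n) (hu : n ≤ u) :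
    ϑ / (2 + ϑ) * u ^ (1 + ϑ) * (u - n) ≤ sbF ϑ (1 + u) - sbF ϑ (1 + n) := by
  have hd : ∀ x : ℝ, HasDerivAt (fun u => sbF ϑ (1 + u) - ϑ / (2 + ϑ) * u ^ (2 + ϑ))
      ((1 + x) ^ (1 + ϑ) - (1 + x) - ϑ * x ^ (1 + ϑ)) x := by
    intro x
    have e1 : HasDerivAt (fun u => sbF ϑ (1 + u)) ((1 + x) ^ (1 + ϑ) - (1 + x)) x := by
      simpa using (sbF_hasDerivAt h0 (1 + x)).comp_const_add 1 x
    have e2 : HasDerivAt (fun v : ℝ => v ^ (2 + ϑ)) ((2 + ϑ) * x ^ (2 + ϑ - 1)) x :=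
      Real.hasDerivAt_rpow_const (Or.inr (by linarith))
    refine (e1.sub (e2.const_mul (ϑ / (2 + ϑ)))).congr_deriv ?_
    have : 2 + ϑ - 1 = 1 + ϑ := by ring
    rw [this]
    have : 2 + ϑ ≠ 0 := by positivity
    field_simp
  have hm : MonotoneOn (fun u => sbF ϑ (1 + u) - ϑ / (2 + ϑ) * u ^ (2 + ϑ)) (Ici 0) := by
    apply monotoneOn_of_deriv_nonneg (convex_Ici 0)
    · exact fun x _ => (hd x).continuousAt.continuousWithinAt
    · exact fun x _ => (hd x).differentiableAt.differentiableWithinAt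
    · intro x hx
      rw [interior_Ici] at hx
      rw [(hd x).deriv]
      have := sbf_lower' h0 h1 (le_of_lt hx)
      linarith
  have h := hm (show n ∈ Ici 0 from hn.le) (show u ∈ Ici 0 from hn.le.trans hu) hu
  simp only at h
  have hu0 : 0 < u := hn.trans_le hu
  have e1 : u ^ (2 + ϑ) = u ^ (1 + ϑ) * u := by
    rw [← Real.rpow_add_one hu0.ne']; congr 1; ring
  have e2 : n ^ (2 + ϑ) = n ^ (1 + ϑ) * n := by
    rw [← Real.rpow_add_one hn.ne']; congr 1; ring
  have e3 : n ^ (1 + ϑ) ≤ u ^ (1 + ϑ) := Real.rpow_le_rpow hn.le hu (by linarith)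
  have e4 : ϑ / (2 + ϑ) * (n ^ (1 + ϑ) * n) ≤ ϑ / (2 + ϑ) * (u ^ (1 + ϑ) * n) := by gcongr
  rw [e1, e2] at h
  linarith

lemma sbF_diff_upper {ϑ n u : ℝ} (h0 : 0 < ϑ) (h1 : ϑ ≤ 1) (hn : 0 < n) (hu : n < u) :
    sbF ϑ (1 + u) - sbF ϑ (1 + n) ≤ u * (1 + u) ^ ϑ * (u - n) := by
  obtain ⟨c, hc, he⟩ := exists_hasDerivAt_eq_slope (fun u => sbF ϑ (1 + u))
    (fun x => (1 + x) ^ (1 + ϑ) - (1 + x)) hu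
    (by
      intro x _
      have := (sbF_hasDerivAt h0 (1 + x)).comp_const_add 1 x
      exact this.continuousAt.continuousWithinAt)
    (by
      intro x _
      simpa using (sbF_hasDerivAt h0 (1 + x)).comp_const_add 1 x)
  have hpos : 0 < u - n := by linarith
  have hc0 : 0 ≤ c := by linarith [hc.1]
  rw [eq_div_iff hpos.ne'] at he
  rw [← he]
  refine mul_le_mul_of_nonneg_right ((sbf_upper h1 hc0).trans ?_) hpos.le
  have := hc.2.le
  have hu0 : 0 ≤ u := hc0.trans this
  gcongr

lemma sbD_mul (ϑ n u : ℝ) : sbD ϑ n u * (u - n) = sbF ϑ (1 + u) - sbF ϑ (1 + n) := by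
  have := sub_smul_dslope (sbF ϑ) (1 + n) (1 + u)
  simp only [smul_eq_mul] at this
  rw [← this, sbD]; ring

lemma sbD_self {ϑ : ℝ} (h0 : 0 < ϑ) (n : ℝ) : sbD ϑ n n = (1 + n) ^ (1 + ϑ) - (1 + n) := by
  rw [sbD, dslope_same, (sbF_hasDerivAt h0 _).deriv]

lemma sbD_lower {ϑ n u : ℝ} (h0 : 0 < ϑ) (h1 : ϑ ≤ 1) (hn : 0 < n) (hu : n ≤ u) :
    ϑ / (2 + ϑ) * u ^ (1 + ϑ) ≤ sbD ϑ n u := by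
  rcases hu.eq_or_lt with rfl | hlt
  · rw [sbD_self h0]
    refine le_trans ?_ (sbf_lower' h0 h1 hn.le)
    gcongr
    exact div_le_self h0.le (by linarith)
  · have := sbF_diff_lower h0 h1 hn hu
    rw [← sbD_mul] at this
    exact le_of_mul_le_mul_right this (by linarith)

lemma sbD_upper {ϑ n u : ℝ} (h0 : 0 < ϑ) (h1 : ϑ ≤ 1) (hn : 0 < n) (hu : n ≤ u) :
    sbD ϑ n u ≤ u * (1 + u) ^ ϑ := by
  rcases hu.eq_or_lt with rfl | hlt
  · rw [sbD_self h0]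
    exact sbf_upper h1 hn.le
  · have := sbF_diff_upper h0 h1 hn hlt
    rw [← sbD_mul] at this
    exact le_of_mul_le_mul_right this (by linarith)

lemma sb_le_u {n s : ℝ} (hn : 0 < n) : n ≤ n * (1 + s ^ 2) := by
  nlinarith [mul_nonneg hn.le (sq_nonneg s)]

lemma sbH_lower {a ϑ n : ℝ} (ha : 0 < a) (h0 : 0 < ϑ) (h1 : ϑ ≤ 1) (hn : 0 < n) (s : ℝ) :
    a * ϑ / (2 + ϑ) / 4 * n ^ ϑ * ((1 + |s|) ^ (1 + ϑ)) ^ 2 ≤ sbH a ϑ n s := by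
  have h := sbD_lower h0 h1 hn (sb_le_u (s := s) hn)
  have hs : 0 < 1 + s ^ 2 := by positivity
  have e1 : (n * (1 + s ^ 2)) ^ (1 + ϑ) = n * n ^ ϑ * (1 + s ^ 2) ^ (1 + ϑ) := by
    rw [Real.mul_rpow hn.le hs.le, Real.rpow_add hn, Real.rpow_one]
  have e2 : ((1 + |s|) ^ (1 + ϑ)) ^ 2 ≤ 4 * (1 + s ^ 2) ^ (1 + ϑ) := by
    have h3 : ((1 + |s|) ^ (1 + ϑ)) ^ 2 = ((1 + |s|) ^ 2) ^ (1 + ϑ) := by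
      rw [← Real.rpow_natCast, ← Real.rpow_natCast, ← Real.rpow_mul (by positivity),
        ← Real.rpow_mul (by positivity), mul_comm]
    have h4 : (1 + |s|) ^ 2 ≤ 2 * (1 + s ^ 2) := by
      nlinarith [sq_nonneg (1 - |s|), sq_abs s]
    have h5 : (2 : ℝ) ^ (1 + ϑ) ≤ 4 := by
      calc (2 : ℝ) ^ (1 + ϑ) ≤ 2 ^ (2 : ℝ) :=
            Real.rpow_le_rpow_of_exponent_le (by norm_num) (by linarith)
        _ = 4 := by norm_num
    rw [h3]
    calc ((1 + |s|) ^ 2) ^ (1 + ϑ) ≤ (2 * (1 + s ^ 2)) ^ (1 + ϑ) :=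
          Real.rpow_le_rpow (by positivity) h4 (by linarith)
      _ = 2 ^ (1 + ϑ) * (1 + s ^ 2) ^ (1 + ϑ) := Real.mul_rpow (by norm_num) hs.le
      _ ≤ _ := by gcongr
  rw [e1] at h
  calc a * ϑ / (2 + ϑ) / 4 * n ^ ϑ * ((1 + |s|) ^ (1 + ϑ)) ^ 2
      ≤ a * ϑ / (2 + ϑ) / 4 * n ^ ϑ * (4 * (1 + s ^ 2) ^ (1 + ϑ)) := by gcongr
    _ = a / n * (ϑ / (2 + ϑ) * (n * n ^ ϑ * (1 + s ^ 2) ^ (1 + ϑ))) := by field_simp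
    _ ≤ sbH a ϑ n s := by
        unfold sbH
        gcongr

lemma sbH_pos {a ϑ n : ℝ} (ha : 0 < a) (h0 : 0 < ϑ) (h1 : ϑ ≤ 1) (hn : 0 < n) (s : ℝ) :
    0 < sbH a ϑ n s :=
  lt_of_lt_of_le (by positivity) (sbH_lower ha h0 h1 hn s)

lemma sbH_upper {a ϑ n : ℝ} (ha : 0 < a) (h0 : 0 < ϑ) (h1 : ϑ ≤ 1) (hn : 0 < n) (s : ℝ) :
    sbH a ϑ n s ≤ a * (1 + s ^ 2) * (1 + n * (1 + s ^ 2)) ^ ϑ := by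
  have h := sbD_upper h0 h1 hn (sb_le_u (s := s) hn)
  calc sbH a ϑ n s ≤ a / n * (n * (1 + s ^ 2) * (1 + n * (1 + s ^ 2)) ^ ϑ) := by
        unfold sbH; gcongr
    _ = _ := by field_simp

lemma sbH_cont (a : ℝ) {ϑ : ℝ} (h0 : 0 < ϑ) (n : ℝ) : Continuous (sbH a ϑ n) := by
  have hF : Continuous (dslope (sbF ϑ) (1 + n)) := by
    rw [← continuousOn_univ, continuousOn_dslope univ_mem]
    exact ⟨fun x _ => (sbF_hasDerivAt h0 x).continuousAt.continuousWithinAt,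
      (sbF_hasDerivAt h0 _).differentiableAt⟩
  unfold sbH sbD
  fun_prop

lemma sbH_even (a ϑ n s : ℝ) : sbH a ϑ n (-s) = sbH a ϑ n s := by
  simp [sbH]

/-- energy identity -/
lemma sbH_energy {a n : ℝ} (ϑ : ℝ) (hn : 0 < n) (s : ℝ) :
    (2 * n * s * √(sbH a ϑ n s)) ^ 2 = (2 * n * s) ^ 2 * (√(sbH a ϑ n s)) ^ 2 ∧
    (2 * n * s) ^ 2 * sbH a ϑ n s =
      4 * a * (sbF ϑ (1 + n * (1 + s ^ 2)) - sbF ϑ (1 + n)) := by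
  refine ⟨by ring, ?_⟩
  rw [← sbD_mul, sbH]
  field_simp
  ring

/-- continuity in the parameter -/
lemma sbH_cont_param (a : ℝ) {ϑ : ℝ} (h0 : 0 < ϑ) {s : ℝ} (hs : s ≠ 0) :
    ContinuousOn (fun n => sbH a ϑ n s) (Ioi 0) := by
  have hF : Continuous (sbF ϑ) :=
    continuous_iff_continuousAt.2 fun x => (sbF_hasDerivAt h0 x).continuousAt
  have : ContinuousOn (fun n => 4 * a * (sbF ϑ (1 + n * (1 + s ^ 2)) - sbF ϑ (1 + n)) /
      (2 * n * s) ^ 2) (Ioi 0) := by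
    apply ContinuousOn.div
    · fun_prop
    · fun_prop
    · intro x hx
      have : x ≠ 0 := ne_of_gt hx
      positivity
  refine this.congr fun n hn => ?_
  have hn' : (0 : ℝ) < n := hn
  simp only
  rw [← (sbH_energy ϑ hn' s).2]
  field_simp

noncomputable def sbG (a ϑ n s : ℝ) : ℝ := (√(sbH a ϑ n s))⁻¹

noncomputable def sbC (a ϑ : ℝ) : ℝ := (√(a * ϑ / (2 + ϑ) / 4))⁻¹

noncomputable def sbX (a ϑ n s : ℝ) : ℝ := ∫ t in (0 : ℝ)..s, sbG a ϑ n t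

noncomputable def sbT (a ϑ n : ℝ) : ℝ := ∫ t in Ioi (0 : ℝ), sbG a ϑ n t

lemma sbC_pos {a ϑ : ℝ} (ha : 0 < a) (h0 : 0 < ϑ) : 0 < sbC a ϑ := by
  unfold sbC; positivity

lemma sbG_pos {a ϑ n : ℝ} (ha : 0 < a) (h0 : 0 < ϑ) (h1 : ϑ ≤ 1) (hn : 0 < n) (s : ℝ) :
    0 < sbG a ϑ n s :=
  inv_pos.2 (Real.sqrt_pos.2 (sbH_pos ha h0 h1 hn s))

lemma sbG_upper {a ϑ n : ℝ} (ha : 0 < a) (h0 : 0 < ϑ) (h1 : ϑ ≤ 1) (hn : 0 < n) (s : ℝ) :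
    sbG a ϑ n s ≤ sbC a ϑ * n ^ (-(ϑ / 2)) * (1 + |s|) ^ (-(1 + ϑ)) := by
  have h := Real.sqrt_le_sqrt (sbH_lower ha h0 h1 hn s)
  have hp : 0 < 1 + |s| := by positivity
  rw [Real.sqrt_mul (by positivity), Real.sqrt_mul (by positivity),
    Real.sqrt_sq (by positivity)] at h
  have e : √(n ^ ϑ) = n ^ (ϑ / 2) := by
    rw [Real.sqrt_eq_rpow, ← Real.rpow_mul hn.le]; congr 1; ring
  rw [e] at h
  rw [sbG, sbC, Real.rpow_neg hn.le, Real.rpow_neg hp.le, ← mul_inv, ← mul_inv]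
  exact inv_anti₀ (by positivity) h

lemma sbG_cont {a ϑ n : ℝ} (ha : 0 < a) (h0 : 0 < ϑ) (h1 : ϑ ≤ 1) (hn : 0 < n) :
    Continuous (sbG a ϑ n) := by
  unfold sbG
  exact (Real.continuous_sqrt.comp (sbH_cont a h0 n)).inv₀
    fun s => (Real.sqrt_pos.2 (sbH_pos ha h0 h1 hn s)).ne'

lemma sb_integrable {ϑ : ℝ} (h0 : 0 < ϑ) :
    Integrable (fun s : ℝ => (1 + |s|) ^ (-(1 + ϑ))) := by
  have := integrable_one_add_norm (E := ℝ) (μ := volume) (r := 1 + ϑ) (by simp [h0])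
  simpa [Real.norm_eq_abs] using this

lemma sbG_integrable {a ϑ n : ℝ} (ha : 0 < a) (h0 : 0 < ϑ) (h1 : ϑ ≤ 1) (hn : 0 < n) :
    Integrable (sbG a ϑ n) := by
  refine ((sb_integrable h0).const_mul (sbC a ϑ * n ^ (-(ϑ / 2)))).mono'
    (sbG_cont ha h0 h1 hn).aestronglyMeasurable (ae_of_all _ fun s => ?_)
  rw [Real.norm_eq_abs, abs_of_pos (sbG_pos ha h0 h1 hn s)]
  exact sbG_upper ha h0 h1 hn s

lemma sbX_hasStrictDerivAt {a ϑ n : ℝ} (ha : 0 < a) (h0 : 0 < ϑ) (h1 : ϑ ≤ 1) (hn : 0 < n)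
    (s : ℝ) : HasStrictDerivAt (sbX a ϑ n) (sbG a ϑ n s) s :=
  intervalIntegral.integral_hasStrictDerivAt_right
    ((sbG_cont ha h0 h1 hn).intervalIntegrable _ _)
    ((sbG_cont ha h0 h1 hn).stronglyMeasurableAtFilter _ _)
    (sbG_cont ha h0 h1 hn).continuousAt

lemma sbX_strictMono {a ϑ n : ℝ} (ha : 0 < a) (h0 : 0 < ϑ) (h1 : ϑ ≤ 1) (hn : 0 < n) :
    StrictMono (sbX a ϑ n) := by
  apply strictMono_of_deriv_pos
  intro s
  rw [(sbX_hasStrictDerivAt ha h0 h1 hn s).hasDerivAt.deriv]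
  exact sbG_pos ha h0 h1 hn s

lemma sbX_odd (a ϑ n s : ℝ) : sbX a ϑ n (-s) = - sbX a ϑ n s := by
  have h : (fun t => sbG a ϑ n (-t)) = sbG a ϑ n := by
    funext t; simp [sbG, sbH_even]
  have := intervalIntegral.integral_comp_neg (a := 0) (b := s) (sbG a ϑ n)
  rw [neg_zero] at this
  unfold sbX
  rw [← neg_eq_iff_eq_neg, ← intervalIntegral.integral_symm, ← this]
  exact congrArg (fun g : ℝ → ℝ => ∫ x in (0:ℝ)..s, g x) h

lemma sbX_zero (a ϑ n : ℝ) : sbX a ϑ n 0 = 0 := by simp [sbX]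

lemma sbX_tendsto {a ϑ n : ℝ} (ha : 0 < a) (h0 : 0 < ϑ) (h1 : ϑ ≤ 1) (hn : 0 < n) :
    Tendsto (sbX a ϑ n) atTop (𝓝 (sbT a ϑ n)) :=
  intervalIntegral_tendsto_integral_Ioi 0 (sbG_integrable ha h0 h1 hn).integrableOn tendsto_id

lemma sbX_lt {a ϑ n : ℝ} (ha : 0 < a) (h0 : 0 < ϑ) (h1 : ϑ ≤ 1) (hn : 0 < n) (s : ℝ) :
    sbX a ϑ n s < sbT a ϑ n :=
  (sbX_strictMono ha h0 h1 hn (lt_add_one s)).trans_le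
    ((sbX_strictMono ha h0 h1 hn).monotone.ge_of_tendsto (sbX_tendsto ha h0 h1 hn) _)

lemma sbX_range {a ϑ n : ℝ} (ha : 0 < a) (h0 : 0 < ϑ) (h1 : ϑ ≤ 1) (hn : 0 < n) :
    range (sbX a ϑ n) = Ioo (-sbT a ϑ n) (sbT a ϑ n) := by
  have hc : Continuous (sbX a ϑ n) := continuous_iff_continuousAt.2
    fun s => (sbX_hasStrictDerivAt ha h0 h1 hn s).hasDerivAt.continuousAt
  apply Subset.antisymm
  · rintro _ ⟨s, rfl⟩
    refine ⟨?_, sbX_lt ha h0 h1 hn s⟩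
    have := sbX_lt ha h0 h1 hn (-s)
    rw [sbX_odd] at this
    linarith
  · have key : ∀ x < sbT a ϑ n, ∃ s, x < sbX a ϑ n s := fun x hx =>
      ((sbX_tendsto ha h0 h1 hn).eventually (lt_mem_nhds hx)).exists
    rintro x ⟨hx1, hx2⟩
    obtain ⟨s, hs⟩ := key x hx2
    obtain ⟨r, hr⟩ := key (-x) (by linarith)
    have hr' : sbX a ϑ n (-r) < x := by rw [sbX_odd]; linarith
    exact mem_range_of_exists_le_of_exists_ge hc ⟨-r, hr'.le⟩ ⟨s, hs.le⟩

lemma sb_limit_le {Φ Φ' : ℝ → ℝ} {L : ℝ} (hd : ∀ x, 0 ≤ x → HasDerivAt Φ (Φ' x) x)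
    (hneg : ∀ x, 0 ≤ x → Φ' x ≤ 0) (hL : Tendsto Φ atTop (𝓝 L)) {s : ℝ} (hs : 0 ≤ s) :
    L ≤ Φ s := by
  have hm : AntitoneOn Φ (Ici 0) := by
    apply antitoneOn_of_deriv_nonpos (convex_Ici 0)
    · exact fun x hx => (hd x hx).continuousAt.continuousWithinAt
    · intro x hx
      rw [interior_Ici] at hx
      exact (hd x (le_of_lt hx)).differentiableAt.differentiableWithinAt
    · intro x hx
      rw [interior_Ici] at hx
      rw [(hd x (le_of_lt hx)).deriv]
      exact hneg x (le_of_lt hx)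
  refine le_of_tendsto hL ?_
  filter_upwards [eventually_ge_atTop s] with t ht
  exact hm hs (hs.trans ht) ht

/-- upper bound for the distance to the boundary -/
lemma sb_dist_upper {a ϑ n : ℝ} (ha : 0 < a) (h0 : 0 < ϑ) (h1 : ϑ ≤ 1) (hn : 0 < n) {s : ℝ}
    (hs : 0 ≤ s) :
    sbT a ϑ n - sbX a ϑ n s ≤ sbC a ϑ / ϑ * (n * (1 + s ^ 2)) ^ (-(ϑ / 2)) := by
  set K := sbC a ϑ * n ^ (-(ϑ / 2)) with hK
  have hKpos : 0 < K := by have := sbC_pos ha h0; positivity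
  have hd : ∀ x, 0 ≤ x → HasDerivAt
      (fun x => K / ϑ * (1 + x) ^ (-ϑ) - (sbT a ϑ n - sbX a ϑ n x))
      (sbG a ϑ n x - K * (1 + x) ^ (-(1 + ϑ))) x := by
    intro x hx
    have e1 : HasDerivAt (fun x : ℝ => (1 + x) ^ (-ϑ)) (1 * (-ϑ) * (1 + x) ^ (-ϑ - 1)) x :=
      ((hasDerivAt_id x).const_add 1).rpow_const (Or.inl (by simp; positivity))
    have e2 := ((sbX_hasStrictDerivAt ha h0 h1 hn x).hasDerivAt).const_sub (sbT a ϑ n)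
    refine ((e1.const_mul (K / ϑ)).sub e2).congr_deriv ?_
    have : -ϑ - 1 = -(1 + ϑ) := by ring
    rw [this]
    field_simp
    ring
  have hL : Tendsto (fun x => K / ϑ * (1 + x) ^ (-ϑ) - (sbT a ϑ n - sbX a ϑ n x)) atTop
      (𝓝 (K / ϑ * 0 - (sbT a ϑ n - sbT a ϑ n))) := by
    refine Tendsto.sub (Tendsto.const_mul _ ?_) (tendsto_const_nhds.sub (sbX_tendsto ha h0 h1 hn))
    exact (tendsto_rpow_neg_atTop h0).comp (tendsto_atTop_add_const_left _ 1 tendsto_id)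
  have h := sb_limit_le hd (by
    intro x hx
    have := sbG_upper ha h0 h1 hn x
    rw [abs_of_nonneg hx] at this
    linarith) hL hs
  have h2 : (1 + s) ^ (-ϑ) ≤ (1 + s ^ 2) ^ (-(ϑ / 2)) := by
    have e : (1 + s) ^ (-ϑ) = ((1 + s) ^ 2) ^ (-(ϑ / 2)) := by
      rw [← Real.rpow_natCast, ← Real.rpow_mul (by positivity)]
      congr 1; push_cast; ring
    rw [e]
    exact Real.rpow_le_rpow_of_nonpos (by positivity) (by nlinarith) (by linarith)
  have h3 : K / ϑ * (1 + s) ^ (-ϑ) ≤ K / ϑ * (1 + s ^ 2) ^ (-(ϑ / 2)) := by gcongr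
  have h4 : sbC a ϑ / ϑ * (n * (1 + s ^ 2)) ^ (-(ϑ / 2)) = K / ϑ * (1 + s ^ 2) ^ (-(ϑ / 2)) := by
    rw [Real.mul_rpow hn.le (by positivity), hK]; ring
  rw [h4]
  linarith

lemma sb_w_upper {a ϑ n : ℝ} (ha : 0 < a) (h0 : 0 < ϑ) (h1 : ϑ ≤ 1) (hn : 0 < n) (s : ℝ) :
    n * |s| * √(sbH a ϑ n s) ≤
      √a * (n * (1 + s ^ 2)) * (1 + n * (1 + s ^ 2)) ^ (ϑ / 2) := by
  have h := sbH_upper ha h0 h1 hn s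
  have hp : 0 < 1 + n * (1 + s ^ 2) := by positivity
  apply le_of_sq_le_sq _ (by positivity)
  have e : ((1 + n * (1 + s ^ 2)) ^ (ϑ / 2)) ^ 2 = (1 + n * (1 + s ^ 2)) ^ ϑ := by
    rw [← Real.rpow_natCast, ← Real.rpow_mul hp.le]; congr 1; push_cast; ring
  rw [mul_pow, mul_pow, mul_pow, mul_pow, e, Real.sq_sqrt ha.le,
    Real.sq_sqrt (sbH_pos ha h0 h1 hn s).le, sq_abs]
  calc n ^ 2 * s ^ 2 * sbH a ϑ n s
      ≤ n ^ 2 * s ^ 2 * (a * (1 + s ^ 2) * (1 + n * (1 + s ^ 2)) ^ ϑ) := by gcongr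
    _ ≤ n ^ 2 * (1 + s ^ 2) * (a * (1 + s ^ 2) * (1 + n * (1 + s ^ 2)) ^ ϑ) := by
        gcongr; linarith
    _ = _ := by ring

/-- lower bound for the distance to the boundary -/
lemma sb_dist_lower {a ϑ n : ℝ} (ha : 0 < a) (h0 : 0 < ϑ) (h1 : ϑ ≤ 1) (hn : 0 < n) {s : ℝ}
    (hs : 0 ≤ s) :
    (1 + n * (1 + s ^ 2)) ^ (-(ϑ / 2)) / (ϑ * √a) ≤ sbT a ϑ n - sbX a ϑ n s := by
  have hsa : 0 < √a := Real.sqrt_pos.2 ha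
  have hd : ∀ x, 0 ≤ x → HasDerivAt
      (fun x => (sbT a ϑ n - sbX a ϑ n x) - (1 + n * (1 + x ^ 2)) ^ (-(ϑ / 2)) / (ϑ * √a))
      (n * x * (1 + n * (1 + x ^ 2)) ^ (-(ϑ / 2) - 1) / √a - sbG a ϑ n x) x := by
    intro x hx
    have e0 : HasDerivAt (fun x : ℝ => 1 + n * (1 + x ^ 2)) (n * (2 * x)) x := by
      simpa using (((hasDerivAt_pow 2 x).const_add 1).const_mul n).const_add 1
    have e1 := e0.rpow_const (p := -(ϑ / 2)) (Or.inl (by positivity))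
    have e2 := ((sbX_hasStrictDerivAt ha h0 h1 hn x).hasDerivAt).const_sub (sbT a ϑ n)
    refine (e2.sub (e1.div_const (ϑ * √a))).congr_deriv ?_
    field_simp
    ring
  have hL : Tendsto
      (fun x => (sbT a ϑ n - sbX a ϑ n x) - (1 + n * (1 + x ^ 2)) ^ (-(ϑ / 2)) / (ϑ * √a)) atTop
      (𝓝 ((sbT a ϑ n - sbT a ϑ n) - 0 / (ϑ * √a))) := by
    refine Tendsto.sub (tendsto_const_nhds.sub (sbX_tendsto ha h0 h1 hn)) (Tendsto.div_const ?_ _)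
    refine (tendsto_rpow_neg_atTop (half_pos h0)).comp ?_
    refine tendsto_atTop_add_const_left _ 1 (Tendsto.const_mul_atTop hn ?_)
    exact tendsto_atTop_add_const_left _ 1 (tendsto_pow_atTop (by norm_num))
  have h := sb_limit_le hd (by
    intro x hx
    have hw := sb_w_upper ha h0 h1 hn x
    rw [abs_of_nonneg hx] at hw
    have hp : 0 < 1 + n * (1 + x ^ 2) := by positivity
    have hH : 0 < √(sbH a ϑ n x) := Real.sqrt_pos.2 (sbH_pos ha h0 h1 hn x)
    have e : (1 + n * (1 + x ^ 2)) ^ (-(ϑ / 2) - 1) =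
        ((1 + n * (1 + x ^ 2)) ^ (ϑ / 2) * (1 + n * (1 + x ^ 2)))⁻¹ := by
      rw [← Real.rpow_add_one hp.ne', ← Real.rpow_neg hp.le]; congr 1; ring
    have hq : 0 < (1 + n * (1 + x ^ 2)) ^ (ϑ / 2) := by positivity
    rw [e, sbG, sub_nonpos, ← div_eq_mul_inv, ← one_div, div_div,
      div_le_div_iff₀ (by positivity) hH, one_mul]
    refine hw.trans ?_
    have : √a * (n * (1 + x ^ 2)) * (1 + n * (1 + x ^ 2)) ^ (ϑ / 2) ≤
        √a * (1 + n * (1 + x ^ 2)) * (1 + n * (1 + x ^ 2)) ^ (ϑ / 2) := by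
      gcongr; linarith
    linarith) hL hs
  simp only [sub_self, zero_div] at h
  linarith

lemma sbT_small {a ϑ A : ℝ} (ha : 0 < a) (h0 : 0 < ϑ) (h1 : ϑ ≤ 1) (hA : 0 < A) :
    ∃ n, 0 < n ∧ sbT a ϑ n ≤ A := by
  have hC : 0 < sbC a ϑ / ϑ := div_pos (sbC_pos ha h0) h0
  refine ⟨(A / (sbC a ϑ / ϑ)) ^ (-(2 / ϑ)), by positivity, ?_⟩
  have := sb_dist_upper ha h0 h1 (n := (A / (sbC a ϑ / ϑ)) ^ (-(2 / ϑ))) (by positivity) le_rfl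
  rw [sbX_zero, ← Real.rpow_natCast] at this
  simp only [Nat.cast_ofNat] at this
  rw [Real.zero_rpow (by norm_num), add_zero, mul_one, ← Real.rpow_mul (by positivity)] at this
  have e : -(2 / ϑ) * -(ϑ / 2) = 1 := by field_simp
  rw [e, Real.rpow_one, mul_div_cancel₀ _ hC.ne'] at this
  linarith

lemma sbT_large {a ϑ A : ℝ} (ha : 0 < a) (h0 : 0 < ϑ) (h1 : ϑ ≤ 1) (hA : 0 < A) :
    ∃ n, 0 < n ∧ A ≤ sbT a ϑ n := by
  set c := √(2 * a) with hc
  have hc0 : 0 < c := by positivity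
  set N := Real.exp (A * c) with hN
  have hN0 : 0 < N := Real.exp_pos _
  set n := 1 / (1 + N ^ 2) with hn
  have hn0 : 0 < n := by positivity
  refine ⟨n, hn0, ?_⟩
  have hd : ∀ x, 0 ≤ x → HasDerivAt (fun x => sbX a ϑ n x - Real.log (1 + x) / c)
      (sbG a ϑ n x - 1 / (1 + x) / c) x := by
    intro x hx
    have e1 : HasDerivAt (fun x : ℝ => Real.log (1 + x)) (1 / (1 + x)) x :=
      ((hasDerivAt_id x).const_add 1).log (by simp; positivity)
    exact (sbX_hasStrictDerivAt ha h0 h1 hn0 x).hasDerivAt.sub (e1.div_const c)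
  have hm : MonotoneOn (fun x => sbX a ϑ n x - Real.log (1 + x) / c) (Icc 0 N) := by
    apply monotoneOn_of_deriv_nonneg (convex_Icc 0 N)
    · exact fun x hx => (hd x hx.1).continuousAt.continuousWithinAt
    · intro x hx
      rw [interior_Icc] at hx
      exact (hd x hx.1.le).differentiableAt.differentiableWithinAt
    · intro x hx
      rw [interior_Icc] at hx
      rw [(hd x hx.1.le).deriv, sub_nonneg, sbG, div_div, ← one_div]
      have hx0 := hx.1
      refine one_div_le_one_div_of_le (Real.sqrt_pos.2 (sbH_pos ha h0 h1 hn0 x)) ?_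
      have hu : n * (1 + x ^ 2) ≤ 1 := by
        rw [hn, one_div_mul_eq_div, div_le_one (by positivity)]
        have := hx.2
        gcongr
      have hH := sbH_upper ha h0 h1 hn0 x
      have h2 : (1 + n * (1 + x ^ 2)) ^ ϑ ≤ 2 := by
        calc (1 + n * (1 + x ^ 2)) ^ ϑ ≤ 2 ^ ϑ :=
              Real.rpow_le_rpow (by positivity) (by linarith) h0.le
          _ ≤ 2 ^ (1 : ℝ) := Real.rpow_le_rpow_of_exponent_le (by norm_num) h1
          _ = 2 := by norm_num
      rw [Real.sqrt_le_iff]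
      refine ⟨by positivity, hH.trans ?_⟩
      calc a * (1 + x ^ 2) * (1 + n * (1 + x ^ 2)) ^ ϑ ≤ a * (1 + x ^ 2) * 2 := by gcongr
        _ ≤ a * (1 + x) ^ 2 * 2 := by gcongr; nlinarith
        _ = ((1 + x) * c) ^ 2 := by
          rw [mul_pow, hc, Real.sq_sqrt (by positivity)]; ring
  have h := hm (left_mem_Icc.2 hN0.le) (right_mem_Icc.2 hN0.le) hN0.le
  simp only [sbX_zero, add_zero, Real.log_one, zero_div, sub_zero] at h
  have hl : A * c ≤ Real.log (1 + N) := by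
    rw [Real.le_log_iff_exp_le (by positivity)]
    linarith
  have : A ≤ Real.log (1 + N) / c := by rwa [le_div_iff₀ hc0]
  linarith [sbX_lt ha h0 h1 hn0 N]

lemma sbT_cont {a ϑ m : ℝ} (ha : 0 < a) (h0 : 0 < ϑ) (h1 : ϑ ≤ 1) (hm : 0 < m) :
    ContinuousOn (sbT a ϑ) (Ici m) := by
  unfold sbT
  refine continuousOn_of_dominated
    (bound := fun s => sbC a ϑ * m ^ (-(ϑ / 2)) * (1 + |s|) ^ (-(1 + ϑ))) ?_ ?_ ?_ ?_
  · intro n hn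
    exact (sbG_cont ha h0 h1 (hm.trans_le hn)).aestronglyMeasurable
  · intro n hn
    refine ae_of_all _ fun s => ?_
    have hn0 : 0 < n := hm.trans_le hn
    rw [Real.norm_eq_abs, abs_of_pos (sbG_pos ha h0 h1 hn0 s)]
    refine (sbG_upper ha h0 h1 hn0 s).trans ?_
    have := sbC_pos ha h0
    have h2 : n ^ (-(ϑ / 2)) ≤ m ^ (-(ϑ / 2)) :=
      Real.rpow_le_rpow_of_nonpos hm hn (by linarith)
    gcongr
  · exact ((sb_integrable h0).const_mul _).integrableOn
  · filter_upwards [ae_restrict_mem measurableSet_Ioi] with s hs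
    have hs' : s ≠ 0 := ne_of_gt hs
    unfold sbG
    refine ContinuousOn.inv₀ ?_ ?_
    · exact ((sbH_cont_param a h0 hs').mono fun n hn => hm.trans_le hn).sqrt
    · intro n hn
      exact (Real.sqrt_pos.2 (sbH_pos ha h0 h1 (hm.trans_le hn) s)).ne'

lemma sbT_surj {a ϑ A : ℝ} (ha : 0 < a) (h0 : 0 < ϑ) (h1 : ϑ ≤ 1) (hA : 0 < A) :
    ∃ n, 0 < n ∧ sbT a ϑ n = A := by
  obtain ⟨n1, hn1, h1'⟩ := sbT_small ha h0 h1 hA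
  obtain ⟨n2, hn2, h2'⟩ := sbT_large ha h0 h1 hA
  have hm : 0 < min n1 n2 := lt_min hn1 hn2
  obtain ⟨n, hn, he⟩ := intermediate_value_uIcc
    ((sbT_cont ha h0 h1 hm).mono (fun x hx => hx.1) : ContinuousOn (sbT a ϑ) (uIcc n1 n2))
    (Icc_subset_uIcc ⟨h1', h2'⟩)
  exact ⟨n, hm.trans_le hn.1, he⟩

noncomputable def sbW (a ϑ n s : ℝ) : ℝ := 2 * n * s * √(sbH a ϑ n s)

noncomputable def sbV (n s : ℝ) : ℝ := 1 + n * (1 + s ^ 2)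

lemma sbV_hasDerivAt (n x : ℝ) : HasDerivAt (sbV n) (2 * n * x) x := by
  have : HasDerivAt (fun x : ℝ => 1 + n * (1 + x ^ 2)) (n * (2 * x)) x := by
    simpa using (((hasDerivAt_pow 2 x).const_add 1).const_mul n).const_add 1
  exact this.congr_deriv (by ring)

lemma sbW_cont (a : ℝ) {ϑ : ℝ} (h0 : 0 < ϑ) (n : ℝ) : Continuous (sbW a ϑ n) := by
  have := sbH_cont a h0 n
  unfold sbW
  fun_prop

lemma sbV_cont (n : ℝ) : Continuous (sbV n) := by
  unfold sbV; fun_prop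

lemma sbV_pos {n : ℝ} (hn : 0 < n) (s : ℝ) : 0 < sbV n s := by
  unfold sbV; positivity

lemma sbf_cont {ϑ : ℝ} (h0 : 0 < ϑ) : Continuous (fun v : ℝ => v ^ (1 + ϑ) - v) :=
  (continuous_id.rpow_const fun _ => Or.inr (by linarith)).sub continuous_id

lemma sbW_hasDerivAt {a ϑ n : ℝ} (ha : 0 < a) (h0 : 0 < ϑ) (h1 : ϑ ≤ 1) (hn : 0 < n) (s : ℝ) :
    HasDerivAt (sbW a ϑ n)
      (2 * a * (sbV n s ^ (1 + ϑ) - sbV n s) * sbG a ϑ n s) s := by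
  have hg : Continuous (fun s => 2 * a * (sbV n s ^ (1 + ϑ) - sbV n s) * sbG a ϑ n s) :=
    (continuous_const.mul ((sbf_cont h0).comp (sbV_cont n))).mul (sbG_cont ha h0 h1 hn)
  refine hasDerivAt_of_hasDerivAt_of_ne' (x := 0)
    (g := fun s => 2 * a * (sbV n s ^ (1 + ϑ) - sbV n s) * sbG a ϑ n s) ?_
    (sbW_cont a h0 n).continuousAt hg.continuousAt s
  intro y hy
  have hE : ∀ t, (2 * n * t) ^ 2 * sbH a ϑ n t = 4 * a * (sbF ϑ (sbV n t) - sbF ϑ (1 + n)) :=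
    fun t => (sbH_energy ϑ hn t).2
  have hHy := sbH_pos ha h0 h1 hn y
  have hEy : 4 * a * (sbF ϑ (sbV n y) - sbF ϑ (1 + n)) ≠ 0 := by
    rw [← hE]; positivity
  have e1 : HasDerivAt (fun t => 4 * a * (sbF ϑ (sbV n t) - sbF ϑ (1 + n)))
      (4 * a * ((sbV n y ^ (1 + ϑ) - sbV n y) * (2 * n * y))) y :=
    (((sbF_hasDerivAt h0 (sbV n y)).comp y (sbV_hasDerivAt n y)).sub_const _).const_mul _
  have e2 := e1.sqrt hEy
  have hsq : ∀ t, √(4 * a * (sbF ϑ (sbV n t) - sbF ϑ (1 + n))) =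
      2 * n * |t| * √(sbH a ϑ n t) := by
    intro t
    rw [← hE, Real.sqrt_mul (sq_nonneg _), Real.sqrt_sq_eq_abs, abs_mul,
      abs_of_pos (by positivity : 0 < 2 * n)]
  have hr : 0 < √(sbH a ϑ n y) := Real.sqrt_pos.2 hHy
  rw [hsq] at e2
  rcases lt_or_gt_of_ne hy with hlt | hgt
  · have e3 := e2.neg
    rw [abs_of_neg hlt] at e3
    refine (e3.congr_of_eventuallyEq ?_).congr_deriv ?_
    · filter_upwards [gt_mem_nhds hlt] with t ht
      simp only [Pi.neg_apply]
      rw [hsq, abs_of_neg ht, sbW]; ring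
    · simp only [sbG]
      field_simp
      ring
  · rw [abs_of_pos hgt] at e2
    refine (e2.congr_of_eventuallyEq ?_).congr_deriv ?_
    · filter_upwards [lt_mem_nhds hgt] with t ht
      rw [hsq, abs_of_pos ht, sbW]
    · simp only [sbG]
      field_simp
      ring

lemma sb_inverse {a ϑ n : ℝ} (ha : 0 < a) (h0 : 0 < ϑ) (h1 : ϑ ≤ 1) (hn : 0 < n) :
    ∃ S : ℝ → ℝ, (∀ s, S (sbX a ϑ n s) = s) ∧
      (∀ x ∈ Ioo (-sbT a ϑ n) (sbT a ϑ n), sbX a ϑ n (S x) = x) ∧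
      ∀ x ∈ Ioo (-sbT a ϑ n) (sbT a ϑ n), HasDerivAt S (√(sbH a ϑ n (S x))) x := by
  have hc : Continuous (sbX a ϑ n) := continuous_iff_continuousAt.2
    fun s => (sbX_hasStrictDerivAt ha h0 h1 hn s).hasDerivAt.continuousAt
  have ho : IsOpenMap (sbX a ϑ n) := isOpenMap_of_hasStrictDerivAt
    (fun s => sbX_hasStrictDerivAt ha h0 h1 hn s) (fun s => (sbG_pos ha h0 h1 hn s).ne')
  have hE : IsOpenEmbedding (sbX a ϑ n) :=
    .of_continuous_injective_isOpenMap hc (sbX_strictMono ha h0 h1 hn).injective ho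
  let e := hE.toOpenPartialHomeomorph (sbX a ϑ n)
  have ht : e.target = Ioo (-sbT a ϑ n) (sbT a ϑ n) := by
    rw [← sbX_range ha h0 h1 hn]; exact hE.toOpenPartialHomeomorph_target
  refine ⟨e.symm, fun s => ?_, fun x hx => ?_, fun x hx => ?_⟩
  · exact e.left_inv (by simp [e])
  · exact e.right_inv (ht ▸ hx)
  · have := e.hasDerivAt_symm (a := x) (f' := sbG a ϑ n (e.symm x)) (ht ▸ hx)
      (sbG_pos ha h0 h1 hn _).ne' (sbX_hasStrictDerivAt ha h0 h1 hn _).hasDerivAt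
    simpa [sbG] using this

/-- even profile with its estimates -/
lemma sb_profile {a ϑ A : ℝ} (ha : 0 < a) (h0 : 0 < ϑ) (h1 : ϑ ≤ 1) (hA : 0 < A) :
    ∃ v v' : ℝ → ℝ, (∀ x ∈ Ioo (-A) A, v (-x) = v x) ∧
      (∀ x ∈ Ioo (-A) A, HasDerivAt v (v' x) x) ∧
      (∀ x ∈ Ioo (-A) A, HasDerivAt v' (2 * a * (v x ^ (1 + ϑ) - v x)) x) ∧
      (∀ x ∈ Ioo (-A) A, 1 < v x) ∧
      (∀ x ∈ Ioo (-A) A, v x ^ (-(ϑ / 2)) / (ϑ * √a) ≤ A - |x|) ∧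
      (∀ x ∈ Ioo (-A) A, A - |x| ≤ sbC a ϑ / ϑ * (v x - 1) ^ (-(ϑ / 2))) ∧
      (∀ x ∈ Ioo (-A) A, |v' x| ≤ 2 * √a * (v x - 1) * (v x) ^ (ϑ / 2)) := by
  obtain ⟨n, hn, rfl⟩ := sbT_surj ha h0 h1 hA
  obtain ⟨S, hl, hr, hd⟩ := sb_inverse ha h0 h1 hn
  have hodd : ∀ x ∈ Ioo (-sbT a ϑ n) (sbT a ϑ n), S (-x) = - S x := by
    intro x hx
    conv_lhs => rw [← hr x hx, ← sbX_odd]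
    exact hl _
  have habs : ∀ x ∈ Ioo (-sbT a ϑ n) (sbT a ϑ n), sbX a ϑ n |S x| = |x| := by
    intro x hx
    have hm := (sbX_strictMono ha h0 h1 hn).monotone
    conv_rhs => rw [← hr x hx]
    rcases le_total 0 (S x) with h | h
    · have h2 := hm h
      rw [sbX_zero] at h2
      rw [abs_of_nonneg h, abs_of_nonneg h2]
    · have h2 := hm h
      rw [sbX_zero] at h2
      rw [abs_of_nonpos h, abs_of_nonpos h2, sbX_odd]
  have hV1 : ∀ s, sbV n s - 1 = n * (1 + s ^ 2) := fun s => by unfold sbV; ring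
  refine ⟨fun x => sbV n (S x), fun x => sbW a ϑ n (S x), ?_, ?_, ?_, ?_, ?_, ?_, ?_⟩
  · intro x hx
    simp only [hodd x hx, sbV, neg_sq]
  · intro x hx
    exact (sbV_hasDerivAt n (S x)).comp x (hd x hx)
  · intro x hx
    refine ((sbW_hasDerivAt ha h0 h1 hn (S x)).comp x (hd x hx)).congr_deriv ?_
    have : 0 < √(sbH a ϑ n (S x)) := Real.sqrt_pos.2 (sbH_pos ha h0 h1 hn _)
    rw [sbG]
    field_simp
  · intro x hx
    have : 0 < n * (1 + S x ^ 2) := by positivity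
    simp only [sbV]
    linarith
  · intro x hx
    have := sb_dist_lower ha h0 h1 hn (abs_nonneg (S x))
    rw [habs x hx, sq_abs] at this
    exact this
  · intro x hx
    have := sb_dist_upper ha h0 h1 hn (abs_nonneg (S x))
    rw [habs x hx, sq_abs] at this
    simp only [hV1]
    exact this
  · intro x hx
    have := sb_w_upper ha h0 h1 hn (S x)
    simp only [hV1]
    rw [sbW, abs_mul, abs_mul, abs_of_pos (by positivity : 0 < 2 * n),
      abs_of_nonneg (Real.sqrt_nonneg _), sbV]
    linarith

/-- Existence of a blow-up solution of the stable ODE (1/2)h″ = −a h + b h^{1+ϑ}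
(Lemma 4.2): there are positive constants c₁, c₂, c₃ (depending on a, b, ϑ) such that for
every A > 0 there is an even C² function h_A on (−A,A) solving the ODE, blowing up at ±A,
and satisfying the bounds (1) and (2). -/
theorem stable_blowup_solution
    (a b ϑ : ℝ) (ha : 0 < a) (hb : 0 < b) (hϑ₀ : 0 < ϑ) (hϑ₁ : ϑ ≤ 1) :
    ∃ c₁ : ℝ, 0 < c₁ ∧ ∃ c₂ : ℝ, 0 < c₂ ∧ ∃ c₃ : ℝ, 0 < c₃ ∧
      ∀ A : ℝ, 0 < A → ∃ h : ℝ → ℝ,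
        (∀ x : ℝ, |x| < A → h (-x) = h x) ∧
        (∀ x ∈ Ioo (-A) A, ContDiffAt ℝ 2 h x) ∧
        (∀ x : ℝ, |x| < A →
          (1 / 2) * deriv (deriv h) x = -a * h x + b * h x ^ (1 + ϑ)) ∧
        Tendsto h (𝓝[<] A) atTop ∧ Tendsto h (𝓝[>] (-A)) atTop ∧
        (∀ x : ℝ, |x| < A →
          max ((a / b) ^ (1 / ϑ)) (c₂ * A ^ (2 / ϑ) * (A ^ 2 - x ^ 2) ^ (-(2 / ϑ))) ≤ h x ∧
          h x ≤ (a / b) ^ (1 / ϑ) * (1 + c₁ * A ^ (2 / ϑ) * (A ^ 2 - x ^ 2) ^ (-(2 / ϑ)))) ∧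
        (∀ x : ℝ, |x| < A → |deriv h x| / h x ≤ c₃ / (A - |x|)) := by
  set z := (a / b) ^ (1 / ϑ) with hz
  have hz0 : 0 < z := by positivity
  have hzϑ : z ^ ϑ = a / b := by
    rw [hz, ← Real.rpow_mul (by positivity), one_div_mul_cancel hϑ₀.ne', Real.rpow_one]
  set C := sbC a ϑ / ϑ with hC
  have hC0 : 0 < C := div_pos (sbC_pos ha hϑ₀) hϑ₀
  have hsa : 0 < √a := Real.sqrt_pos.2 ha
  refine ⟨(2 * C) ^ (2 / ϑ), by positivity, z * (ϑ * √a) ^ (-(2 / ϑ)), by positivity,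
    2 * √a * C, by positivity, fun A hA => ?_⟩
  obtain ⟨v, v', heven, hv, hv', hgt, hlow, hup, hder⟩ := sb_profile ha hϑ₀ hϑ₁ hA
  have hmem : ∀ x : ℝ, |x| < A → x ∈ Ioo (-A) A := fun x hx => abs_lt.1 hx
  have hd1 : ∀ x ∈ Ioo (-A) A, HasDerivAt (fun x => z * v x) (z * v' x) x :=
    fun x hx => (hv x hx).const_mul z
  have hd1' : EqOn (deriv (fun x => z * v x)) (fun x => z * v' x) (Ioo (-A) A) :=
    fun x hx => (hd1 x hx).deriv
  have hd2 : ∀ x ∈ Ioo (-A) A, HasDerivAt (deriv (fun x => z * v x))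
      (z * (2 * a * (v x ^ (1 + ϑ) - v x))) x := fun x hx =>
    ((hv' x hx).const_mul z).congr_of_eventuallyEq
      (hd1'.eventuallyEq_of_mem (isOpen_Ioo.mem_nhds hx))
  -- elementary comparison of A / (A ^ 2 - x ^ 2) with the distance to the boundary
  have hq : ∀ x : ℝ, |x| < A → 0 < A ^ 2 - x ^ 2 ∧
      A ^ (2 / ϑ) * (A ^ 2 - x ^ 2) ^ (-(2 / ϑ)) = ((A ^ 2 - x ^ 2) / A) ^ (-(2 / ϑ)) ∧
      A - |x| ≤ (A ^ 2 - x ^ 2) / A ∧ (A ^ 2 - x ^ 2) / A ≤ 2 * (A - |x|) := by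
    intro x hx
    have h1 : A ^ 2 - x ^ 2 = (A - |x|) * (A + |x|) := by rw [← sq_abs x]; ring
    have hp : 0 < A - |x| := by linarith
    have h2 : 0 < A ^ 2 - x ^ 2 := by rw [h1]; positivity
    refine ⟨h2, ?_, ?_, ?_⟩
    · rw [Real.div_rpow h2.le hA.le, Real.rpow_neg hA.le, div_inv_eq_mul, mul_comm]
    · rw [le_div_iff₀ hA, h1]
      gcongr
      linarith [abs_nonneg x]
    · rw [div_le_iff₀ hA, h1]
      nlinarith
  have hlow' : ∀ x : ℝ, |x| < A →
      z * (ϑ * √a) ^ (-(2 / ϑ)) * A ^ (2 / ϑ) * (A ^ 2 - x ^ 2) ^ (-(2 / ϑ)) ≤ z * v x := by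
    intro x hx
    obtain ⟨h1, h2, h3, h4⟩ := hq x hx
    have hm := hmem x hx
    have hvp : 0 < v x := by linarith [hgt x hm]
    rw [mul_assoc, h2, mul_assoc, ← Real.mul_rpow (by positivity) (by positivity)]
    refine mul_le_mul_of_nonneg_left ?_ hz0.le
    have h5 := (hlow x hm).trans h3
    rw [div_le_iff₀ (by positivity), mul_comm] at h5
    calc (ϑ * √a * ((A ^ 2 - x ^ 2) / A)) ^ (-(2 / ϑ)) ≤ (v x ^ (-(ϑ / 2))) ^ (-(2 / ϑ)) :=
          Real.rpow_le_rpow_of_nonpos (by positivity) h5 (by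
            have : 0 < 2 / ϑ := by positivity
            linarith)
      _ = v x := by
          rw [← Real.rpow_mul hvp.le]
          have : -(ϑ / 2) * -(2 / ϑ) = 1 := by field_simp
          rw [this, Real.rpow_one]
  have htend : ∀ l : Filter ℝ, (∀ᶠ x in l, |x| < A) →
      Tendsto (fun x : ℝ => A ^ 2 - x ^ 2) l (𝓝 0) → Tendsto (fun x => z * v x) l atTop := by
    intro l hl hl0
    have h1 : Tendsto (fun x : ℝ => A ^ 2 - x ^ 2) l (𝓝[>] 0) :=
      tendsto_nhdsWithin_iff.2 ⟨hl0, hl.mono fun x hx => (hq x hx).1⟩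
    have h2 := (tendsto_rpow_neg_nhdsGT_zero
      (y := -(2 / ϑ)) (neg_lt_zero.2 (by positivity))).comp h1
    have h3 := h2.const_mul_atTop
      (show 0 < z * (ϑ * √a) ^ (-(2 / ϑ)) * A ^ (2 / ϑ) by positivity)
    exact tendsto_atTop_mono' l (hl.mono fun x hx => hlow' x hx) h3
  refine ⟨fun x => z * v x, ?_, ?_, ?_, ?_, ?_, ?_, ?_⟩
  · intro x hx
    simp only [heven x (hmem x hx)]
  · intro x hx
    have hcv : ContinuousOn v (Ioo (-A) A) :=
      fun y hy => (hv y hy).continuousAt.continuousWithinAt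
    have : ContDiffOn ℝ (1 + 1) (fun x => z * v x) (Ioo (-A) A) := by
      rw [contDiffOn_succ_iff_deriv_of_isOpen isOpen_Ioo]
      refine ⟨fun y hy => (hd1 y hy).differentiableAt.differentiableWithinAt, by simp, ?_⟩
      have : ContDiffOn ℝ (0 + 1) (deriv (fun x => z * v x)) (Ioo (-A) A) := by
        rw [contDiffOn_succ_iff_deriv_of_isOpen isOpen_Ioo]
        refine ⟨fun y hy => (hd2 y hy).differentiableAt.differentiableWithinAt, by simp, ?_⟩
        rw [contDiffOn_zero]
        refine ContinuousOn.congr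
          (f := fun x => z * (2 * a * (v x ^ (1 + ϑ) - v x))) ?_ fun y hy => (hd2 y hy).deriv
        exact continuousOn_const.mul (continuousOn_const.mul
          ((sbf_cont hϑ₀).comp_continuousOn hcv))
      simpa using this
    have h2 : ContDiffOn ℝ 2 (fun x => z * v x) (Ioo (-A) A) := by
      rwa [one_add_one_eq_two] at this
    exact h2.contDiffAt (isOpen_Ioo.mem_nhds hx)
  · intro x hx
    have hm := hmem x hx
    have hvp : 0 < v x := by linarith [hgt x hm]
    rw [(hd2 x hm).deriv, Real.mul_rpow hz0.le hvp.le, Real.rpow_add hz0, Real.rpow_one, hzϑ]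
    field_simp
    ring
  · apply htend
    · filter_upwards [Ioo_mem_nhdsLT (show (-A) < A by linarith)] with x hx
      exact abs_lt.2 hx
    · have : Tendsto (fun x : ℝ => A ^ 2 - x ^ 2) (𝓝 A) (𝓝 (A ^ 2 - A ^ 2)) :=
        (Continuous.tendsto (by fun_prop) A)
      rw [sub_self] at this
      exact this.mono_left nhdsWithin_le_nhds
  · apply htend
    · filter_upwards [Ioo_mem_nhdsGT (show (-A) < A by linarith)] with x hx
      exact abs_lt.2 hx
    · have : Tendsto (fun x : ℝ => A ^ 2 - x ^ 2) (𝓝 (-A)) (𝓝 (A ^ 2 - (-A) ^ 2)) :=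
        (Continuous.tendsto (by fun_prop) (-A))
      rw [neg_sq, sub_self] at this
      exact this.mono_left nhdsWithin_le_nhds
  · intro x hx
    have hm := hmem x hx
    have hv1 := hgt x hm
    obtain ⟨h1, h2, h3, h4⟩ := hq x hx
    refine ⟨max_le ?_ (hlow' x hx), ?_⟩
    · exact le_mul_of_one_le_right hz0.le hv1.le
    · refine mul_le_mul_of_nonneg_left ?_ hz0.le
      rw [mul_assoc, h2]
      have hu : 0 < v x - 1 := by linarith
      have h5 : (A ^ 2 - x ^ 2) / A / (2 * C) ≤ (v x - 1) ^ (-(ϑ / 2)) := by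
        rw [div_le_iff₀ (by positivity)]
        have := hup x hm
        linarith
      have h6 : ((v x - 1) ^ (-(ϑ / 2))) ^ (-(2 / ϑ)) ≤
          ((A ^ 2 - x ^ 2) / A / (2 * C)) ^ (-(2 / ϑ)) :=
        Real.rpow_le_rpow_of_nonpos (by positivity) h5 (by
            have : 0 < 2 / ϑ := by positivity
            linarith)
      rw [← Real.rpow_mul hu.le] at h6
      have e : -(ϑ / 2) * -(2 / ϑ) = 1 := by field_simp
      rw [e, Real.rpow_one, Real.div_rpow (by positivity) (by positivity),
        Real.rpow_neg (by positivity : 0 ≤ 2 * C), div_inv_eq_mul] at h6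
      linarith
  · intro x hx
    have hm := hmem x hx
    have hv1 := hgt x hm
    have hu : 0 < v x - 1 := by linarith
    have hvp : 0 < v x := by linarith
    have hp : 0 < A - |x| := by linarith
    rw [(hd1 x hm).deriv, abs_mul, abs_of_pos hz0, mul_div_mul_left _ _ hz0.ne',
      div_le_div_iff₀ hvp hp]
    have e1 : (v x - 1) * (v x - 1) ^ (-(ϑ / 2)) = (v x - 1) ^ (1 - ϑ / 2) := by
      rw [sub_eq_add_neg 1 (ϑ / 2), Real.rpow_add hu, Real.rpow_one]
    have e2 : (v x) ^ (1 - ϑ / 2) * v x ^ (ϑ / 2) = v x := by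
      rw [← Real.rpow_add hvp, sub_add_cancel, Real.rpow_one]
    have e3 : (v x - 1) ^ (1 - ϑ / 2) ≤ (v x) ^ (1 - ϑ / 2) :=
      Real.rpow_le_rpow hu.le (by linarith) (by linarith)
    calc |v' x| * (A - |x|)
        ≤ (2 * √a * (v x - 1) * (v x) ^ (ϑ / 2)) * (C * (v x - 1) ^ (-(ϑ / 2))) :=
          mul_le_mul (hder x hm) (hup x hm) hp.le (by positivity)
      _ = 2 * √a * C * (((v x - 1) * (v x - 1) ^ (-(ϑ / 2))) * (v x) ^ (ϑ / 2)) := by ring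
      _ ≤ 2 * √a * C * ((v x) ^ (1 - ϑ / 2) * v x ^ (ϑ / 2)) := by rw [e1]; gcongr
      _ = 2 * √a * C * v x := by rw [e2]
end
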